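/- Let n ≥ 2 and let θ : [0,∞) → 𝒳ₙ be continuous with multiradial Dirichlet energy J(θ) < ∞. Then for every j ∈ {1,…,n}, the gap θ^{j+1}_t − θ^j_t converges to 2π/n as t → ∞. -/

import Mathlib

open MeasureTheory Filter Set
open scoped Real Topology ENNReal Classical

noncomputable section

/-- The configuration space `𝒳ₙ` of `n` ordered points on (a lift of) the circle:
`θ¹ < θ² < ⋯ < θⁿ < θ¹ + 2π`. -/
def Xspace (n : ℕ) : Set (Fin n → ℝ) :=
  {x | StrictMono x ∧ ∀ i j : Fin n, x i < x j + 2 * π}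

/-- The value `θ^{j+1}`, with the convention `θ^{n+1} = θ¹ + 2π`. -/
def nextVal {n : ℕ} (x : Fin n → ℝ) (j : Fin n) : ℝ :=
  if h : (j : ℕ) + 1 < n then x ⟨(j : ℕ) + 1, h⟩ else x ⟨0, j.pos⟩ + 2 * π

/-- The gap `θ^{j+1} - θ^j` (with wrap-around convention). -/
def gap {n : ℕ} (x : Fin n → ℝ) (j : Fin n) : ℝ := nextVal x j - x j

/-- The minimal gap `Δ(θ) = min_j (θ^{j+1} - θ^j)`. -/
def minGap {n : ℕ} (x : Fin n → ℝ) : ℝ := ⨅ j : Fin n, gap x j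

/-- `d(θ) := max_j |2π/n - (θ^{j+1} - θ^j)|`. -/
def dGap {n : ℕ} (x : Fin n → ℝ) : ℝ := ⨆ j : Fin n, |2 * π / n - gap x j|

/-- `φ^j(θ) = ∑_{k ≠ j} cot((θ^j - θ^k)/2)`. -/
def phi {n : ℕ} (x : Fin n → ℝ) (j : Fin n) : ℝ :=
  ∑ k ∈ Finset.univ.erase j, Real.cot ((x j - x k) / 2)

/-- `φ_a^j := (a/4) φ^j`. -/
def phiA {n : ℕ} (a : ℝ) (x : Fin n → ℝ) (j : Fin n) : ℝ := a / 4 * phi x j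

/-- Absolute continuity of every coordinate of `θ` on `[0, T]`: each component is the
integral of a (locally) integrable function. -/
def AbsCont {n : ℕ} (T : ℝ) (θ : ℝ → Fin n → ℝ) : Prop :=
  ∃ v : ℝ → Fin n → ℝ, (∀ j, IntegrableOn (fun s => v s j) (Icc 0 T)) ∧
    ∀ t ∈ Icc (0 : ℝ) T, ∀ j, θ t j = θ 0 j + ∫ s in (0 : ℝ)..t, v s j

/-- Truncated multiradial Dirichlet energy `J_T(θ)`. -/
def mEnergy (n : ℕ) (T : ℝ) (θ : ℝ → Fin n → ℝ) : ℝ≥0∞ :=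
  if AbsCont T θ then
    ENNReal.ofReal (1 / 2) *
      ∫⁻ s in Ioc (0 : ℝ) T,
        ENNReal.ofReal (∑ j, (deriv (fun t => θ t j) s - 2 * phi (θ s) j) ^ 2)
  else ⊤

/-- Multiradial Dirichlet energy `J(θ) = lim_{T→∞} J_T(θ)`, the supremum of the
nondecreasing family `J_T(θ)`. -/
def mEnergyInf (n : ℕ) (θ : ℝ → Fin n → ℝ) : ℝ≥0∞ := ⨆ T : ℝ, mEnergy n T θ

/-!
The drift `φ` is strongly monotone on `𝒳ₙ`, because `cot` has slope at most `-1` on `(0, π)`, and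
it vanishes at the regular `n`-gon. Hence the sum `S` of the squared differences of the
displacements of `θ` from the regular `n`-gon satisfies `S' ≤ -n S + 2 ∑ⱼ |θ̇ʲ - 2 φʲ(θ)|²`, in
which the forcing term is integrable over `[0, ∞)`. This forces `S → 0`, and `S` dominates the
squared deviation of every gap from `2π/n`. Only differences of displacements can be controlled, as
a common rotation of the points costs no restoring force.
-/

/-! ### The cotangent -/

lemma cot_neg (x : ℝ) : Real.cot (-x) = -Real.cot x := by
  rw [← Real.tan_inv_eq_cot, Real.tan_neg, inv_neg, Real.tan_inv_eq_cot]

lemma cot_periodic : Function.Periodic Real.cot π := fun x => by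
  rw [← Real.tan_inv_eq_cot, Real.tan_periodic x, Real.tan_inv_eq_cot]

lemma measurable_cot : Measurable Real.cot := by
  rw [funext Real.cot_eq_cos_div_sin]
  exact Real.measurable_cos.div Real.measurable_sin

lemma hasDerivAt_cot {x : ℝ} (hx : Real.sin x ≠ 0) :
    HasDerivAt Real.cot (-(1 / Real.sin x ^ 2)) x := by
  rw [funext Real.cot_eq_cos_div_sin]
  convert! (Real.hasDerivAt_cos x).fun_div (Real.hasDerivAt_sin x) hx using 1
  rw [← Real.sin_sq_add_cos_sq x]
  ring

lemma antitoneOn_cot_add_self {s : Set ℝ} (hs : Convex ℝ s) (hsin : ∀ x ∈ s, Real.sin x ≠ 0) :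
    AntitoneOn (fun x => Real.cot x + x) s := by
  have hderiv : ∀ x ∈ s, HasDerivAt (fun x => Real.cot x + x) (-(1 / Real.sin x ^ 2) + 1) x :=
    fun x hx => (hasDerivAt_cot (hsin x hx)).add (hasDerivAt_id x)
  refine antitoneOn_of_hasDerivWithinAt_nonpos hs
    (fun x hx => (hderiv x hx).continuousAt.continuousWithinAt)
    (fun x hx => (hderiv x (interior_subset hx)).hasDerivWithinAt) fun x hx => ?_
  have hpos : 0 < Real.sin x ^ 2 := by have := hsin x (interior_subset hx); positivity
  have : 1 ≤ 1 / Real.sin x ^ 2 := (one_le_div hpos).2 (Real.sin_sq_le_one x)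
  linarith

lemma sub_mul_cot_sub_cot_le {s : Set ℝ} (hs : Convex ℝ s) (hsin : ∀ x ∈ s, Real.sin x ≠ 0)
    {a b : ℝ} (ha : a ∈ s) (hb : b ∈ s) :
    (a - b) * (Real.cot a - Real.cot b) ≤ -(a - b) ^ 2 := by
  have hanti := antitoneOn_cot_add_self hs hsin
  rcases le_total a b with h | h
  · nlinarith [hanti ha hb h]
  · nlinarith [hanti hb ha h]

/-! ### Sums of pairwise differences -/

section SpreadForm

variable {ι : Type*} [Fintype ι]

lemma two_mul_sum_mul_sum_of_antisymm {R : Type*} [CommRing R] (z : ι → R) {a : ι → ι → R}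
    (ha : ∀ j k, a k j = -a j k) :
    2 * ∑ j, z j * ∑ k, a j k = ∑ j, ∑ k, (z j - z k) * a j k := by
  have hswap : ∑ j, ∑ k, z k * a j k = -∑ j, ∑ k, z j * a j k := by
    rw [Finset.sum_comm]
    simp only [← Finset.sum_neg_distrib, ← mul_neg, ← ha]
  simp only [sub_mul, Finset.sum_sub_distrib, hswap, Finset.mul_sum, two_mul, sub_neg_eq_add,
    Finset.sum_add_distrib]

/-- The bilinear form `∑ⱼₖ (zⱼ - zₖ)(wⱼ - wₖ)`, a multiple of the empirical covariance. Its kernel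
consists of the constant vectors, so it measures configurations up to a common translation. -/
def spreadForm (z w : ι → ℝ) : ℝ := ∑ j, ∑ k, (z j - z k) * (w j - w k)

lemma spreadForm_eq (z w : ι → ℝ) :
    spreadForm z w = 2 * Fintype.card ι * ∑ j, z j * w j - 2 * (∑ j, z j) * ∑ j, w j := by
  have hexpand : ∀ j k, (z j - z k) * (w j - w k) =
      z j * w j + z k * w k - z j * w k - z k * w j := fun j k => by ring
  simp only [spreadForm, hexpand, Finset.sum_sub_distrib, Finset.sum_add_distrib,
    Finset.sum_const, Finset.card_univ, nsmul_eq_mul, ← Finset.mul_sum, ← Finset.sum_mul]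
  ring

lemma spreadForm_self_nonneg (z : ι → ℝ) : 0 ≤ spreadForm z z :=
  Finset.sum_nonneg fun _ _ => Finset.sum_nonneg fun _ _ => mul_self_nonneg _

lemma sq_sub_le_spreadForm_self (z : ι → ℝ) (j k : ι) : (z j - z k) ^ 2 ≤ spreadForm z z := by
  have hrow : (z j - z k) * (z j - z k) ≤ ∑ k, (z j - z k) * (z j - z k) :=
    Finset.single_le_sum (f := fun k => (z j - z k) * (z j - z k))
      (fun _ _ => mul_self_nonneg _) (Finset.mem_univ k)
  have hrows : ∑ k, (z j - z k) * (z j - z k) ≤ spreadForm z z :=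
    Finset.single_le_sum (f := fun j => ∑ k, (z j - z k) * (z j - z k))
      (fun _ _ => Finset.sum_nonneg fun _ _ => mul_self_nonneg _) (Finset.mem_univ j)
  exact (sq (z j - z k)).trans_le (hrow.trans hrows)

lemma spreadForm_self_le (z : ι → ℝ) :
    spreadForm z z ≤ 2 * Fintype.card ι * ∑ j, z j ^ 2 := by
  simp only [spreadForm_eq, ← sq]
  nlinarith [sq_nonneg (∑ j, z j)]

lemma two_mul_spreadForm_le {c : ℝ} (hc : 0 < c) (z w : ι → ℝ) :
    2 * spreadForm z w ≤ c * spreadForm z z + c⁻¹ * spreadForm w w := by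
  simp only [spreadForm, Finset.mul_sum, ← Finset.sum_add_distrib]
  gcongr with j _ k _
  have hsq : c * ((z j - z k) * (z j - z k)) + c⁻¹ * ((w j - w k) * (w j - w k)) -
      2 * ((z j - z k) * (w j - w k)) = c⁻¹ * (c * (z j - z k) - (w j - w k)) ^ 2 := by
    field_simp
    ring
  have : 0 ≤ c⁻¹ * (c * (z j - z k) - (w j - w k)) ^ 2 := by positivity
  linarith

lemma hasDerivAt_spreadForm_self {z : ℝ → ι → ℝ} {z' : ι → ℝ} {s : ℝ}
    (hz : ∀ j, HasDerivAt (fun t => z t j) (z' j) s) :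
    HasDerivAt (fun t => spreadForm (z t) (z t)) (2 * spreadForm (z s) z') s := by
  simp only [spreadForm, Finset.mul_sum]
  refine HasDerivAt.fun_sum fun j _ => HasDerivAt.fun_sum fun k _ => ?_
  have hjk := (hz j).fun_sub (hz k)
  exact (hjk.fun_mul hjk).congr_deriv (by ring)

end SpreadForm

/-! ### The drift -/

section Drift

variable {n : ℕ} {x y : Fin n → ℝ}

/-- The vertices `2πj/n` of the regular `n`-gon, the configuration with equal gaps. -/
def regularConfig (n : ℕ) (j : Fin n) : ℝ := 2 * π * j / n

lemma half_sub_mem_Ioo (hx : x ∈ Xspace n) {j k : Fin n} (hkj : k < j) :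
    (x j - x k) / 2 ∈ Ioo 0 π := by
  constructor
  · linarith [hx.1 hkj]
  · linarith [hx.2 j k]

lemma regularConfig_mem_Xspace (n : ℕ) : regularConfig n ∈ Xspace n := by
  refine ⟨fun i j hij => ?_, fun i j => ?_⟩
  · have hn : (0 : ℝ) < n := by exact_mod_cast i.pos
    unfold regularConfig
    gcongr
    exact hij
  · have hn : (0 : ℝ) < n := by exact_mod_cast i.pos
    have hi : regularConfig n i < 2 * π := by
      rw [regularConfig, div_lt_iff₀ hn]
      gcongr
      exact_mod_cast i.isLt
    have hj : 0 ≤ regularConfig n j := by unfold regularConfig; positivity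
    linarith

/-- The missing diagonal term is the junk value `cot 0 = cos 0 / 0 = 0`. -/
lemma phi_eq_sum_univ (x : Fin n → ℝ) (j : Fin n) :
    phi x j = ∑ k, Real.cot ((x j - x k) / 2) :=
  Finset.sum_erase _ (by simp [Real.cot_eq_cos_div_sin])

lemma cot_half_sub_swap (x : Fin n → ℝ) (j k : Fin n) :
    Real.cot ((x k - x j) / 2) = -Real.cot ((x j - x k) / 2) := by
  rw [← cot_neg, ← neg_div, neg_sub]

lemma sum_phi (x : Fin n → ℝ) : ∑ j, phi x j = 0 := by
  have h := two_mul_sum_mul_sum_of_antisymm (fun _ => (1 : ℝ)) (cot_half_sub_swap x)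
  simpa [phi_eq_sum_univ] using h

lemma sub_mul_cot_half_sub_le (hx : x ∈ Xspace n) (hy : y ∈ Xspace n) (j k : Fin n) :
    ((x - y) j - (x - y) k) * (Real.cot ((x j - x k) / 2) - Real.cot ((y j - y k) / 2)) ≤
      -(((x - y) j - (x - y) k) * ((x - y) j - (x - y) k) / 2) := by
  have hlt : ∀ {j k : Fin n}, k < j →
      ((x - y) j - (x - y) k) * (Real.cot ((x j - x k) / 2) - Real.cot ((y j - y k) / 2)) ≤
        -(((x - y) j - (x - y) k) * ((x - y) j - (x - y) k) / 2) := fun {j k} hkj => by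
    have h := sub_mul_cot_sub_cot_le (convex_Ioo 0 π)
      (fun _ ha => (Real.sin_pos_of_mem_Ioo ha).ne')
      (half_sub_mem_Ioo hx hkj) (half_sub_mem_Ioo hy hkj)
    simp only [Pi.sub_apply]
    linarith
  rcases lt_trichotomy k j with h | rfl | h
  · exact hlt h
  · simp
  · have hkj := hlt h
    rw [cot_half_sub_swap x j, cot_half_sub_swap y j] at hkj
    linarith

lemma sum_sub_mul_phi_sub_phi_le (hx : x ∈ Xspace n) (hy : y ∈ Xspace n) :
    ∑ j, (x - y) j * (phi x j - phi y j) ≤ -(spreadForm (x - y) (x - y) / 4) := by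
  have hpairs := two_mul_sum_mul_sum_of_antisymm (x - y)
    (a := fun j k => Real.cot ((x j - x k) / 2) - Real.cot ((y j - y k) / 2)) fun j k => by
      rw [cot_half_sub_swap x j, cot_half_sub_swap y j]
      ring
  simp only [Finset.sum_sub_distrib, ← phi_eq_sum_univ] at hpairs
  have hle : ∑ j, ∑ k, ((x - y) j - (x - y) k) *
        (Real.cot ((x j - x k) / 2) - Real.cot ((y j - y k) / 2)) ≤
      -(spreadForm (x - y) (x - y) / 2) := by
    simp only [spreadForm, Finset.sum_div, ← Finset.sum_neg_distrib]
    gcongr with j _ k _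
    exact sub_mul_cot_half_sub_le hx hy j k
  linarith

lemma cot_val_fin_sub (j k : Fin n) :
    Real.cot (π * (j - k : Fin n) / n) = Real.cot (π * ((j : ℝ) - k) / n) := by
  have hn : (n : ℝ) ≠ 0 := by exact_mod_cast j.pos.ne'
  have hval : (((j - k : Fin n) : ℕ) : ℝ) = j - k + if k ≤ j then 0 else (n : ℝ) := by
    exact_mod_cast congrArg (Int.cast : ℤ → ℝ) (Fin.intCast_val_sub_eq_sub_add_ite j k)
  rw [hval]
  split_ifs
  · rw [add_zero]
  · rw [← cot_periodic (π * ((j : ℝ) - k) / n)]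
    congr 1
    field_simp

/-- As a function of `j - k` modulo `n`, the summand of the drift at the regular `n`-gon is odd. -/
lemma phi_regularConfig (j : Fin n) : phi (regularConfig n) j = 0 := by
  have : NeZero n := ⟨j.pos.ne'⟩
  set f : Fin n → ℝ := fun m => Real.cot (π * m / n) with hf
  have hodd : ∀ m, f (-m) = -f m := fun m => by
    have h := cot_val_fin_sub 0 m
    simp only [zero_sub, Fin.val_zero, Nat.cast_zero] at h
    simp only [hf]
    rw [h, ← cot_neg]
    congr 1
    ring
  have hsum : ∑ m, f m = 0 := by
    have h := Equiv.sum_comp (Equiv.neg (Fin n)) f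
    simp only [Equiv.neg_apply, hodd, Finset.sum_neg_distrib] at h
    linarith
  rw [phi_eq_sum_univ, ← hsum, ← (Equiv.subLeft j).sum_comp f]
  refine Finset.sum_congr rfl fun k _ => ?_
  simp only [hf, Equiv.subLeft_apply, cot_val_fin_sub, regularConfig]
  congr 1
  ring

end Drift

/-! ### The imbalance of a configuration -/

section Imbalance

variable {n : ℕ} {x : Fin n → ℝ}

/-- The Lyapunov function of the argument: the sum of the squared differences of the displacements
from the regular `n`-gon. It vanishes exactly when all gaps are equal. -/
def imbalance (x : Fin n → ℝ) : ℝ := spreadForm (x - regularConfig n) (x - regularConfig n)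

lemma imbalance_nonneg (x : Fin n → ℝ) : 0 ≤ imbalance x := spreadForm_self_nonneg _

lemma exists_gap_sub_gap_eq (x y : Fin n → ℝ) (j : Fin n) :
    ∃ i, gap x j - gap y j = (x - y) i - (x - y) j := by
  by_cases h : (j : ℕ) + 1 < n
  · refine ⟨⟨j + 1, h⟩, ?_⟩
    simp only [gap, nextVal, dif_pos h, Pi.sub_apply]
    ring
  · refine ⟨⟨0, j.pos⟩, ?_⟩
    simp only [gap, nextVal, dif_neg h, Pi.sub_apply]
    ring

lemma gap_regularConfig (j : Fin n) : gap (regularConfig n) j = 2 * π / n := by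
  have hn : (n : ℝ) ≠ 0 := by exact_mod_cast j.pos.ne'
  by_cases h : (j : ℕ) + 1 < n
  · simp only [gap, nextVal, dif_pos h, regularConfig]
    push_cast
    ring
  · have hj : ((j : ℕ) : ℝ) + 1 = n := by
      have : (j : ℕ) + 1 = n := by omega
      exact_mod_cast this
    simp only [gap, nextVal, dif_neg h, regularConfig]
    field_simp
    push_cast
    linarith

lemma abs_gap_sub_le_sqrt_imbalance (x : Fin n → ℝ) (j : Fin n) :
    |gap x j - 2 * π / n| ≤ √(imbalance x) := by
  obtain ⟨i, hi⟩ := exists_gap_sub_gap_eq x (regularConfig n) j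
  rw [← gap_regularConfig j, hi]
  exact Real.abs_le_sqrt (sq_sub_le_spreadForm_self _ i j)

lemma spreadForm_sub_regularConfig_phi_le (hx : x ∈ Xspace n) :
    spreadForm (x - regularConfig n) (phi x) ≤ -(n / 2 * imbalance x) := by
  have hmono := sum_sub_mul_phi_sub_phi_le hx (regularConfig_mem_Xspace n)
  simp only [phi_regularConfig, sub_zero] at hmono
  calc spreadForm (x - regularConfig n) (phi x)
      = 2 * n * ∑ j, (x - regularConfig n) j * phi x j := by
        rw [spreadForm_eq, sum_phi, mul_zero, sub_zero, Fintype.card_fin]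
    _ ≤ 2 * n * -(imbalance x / 4) := by gcongr; exact hmono
    _ = -(n / 2 * imbalance x) := by ring

lemma two_mul_spreadForm_sub_regularConfig_le (hx : x ∈ Xspace n) (p : Fin n → ℝ) :
    2 * spreadForm (x - regularConfig n) p ≤
      -(n * imbalance x) + 2 * ∑ j, (p j - 2 * phi x j) ^ 2 := by
  rcases n.eq_zero_or_pos with rfl | hn
  · simp [spreadForm]
  have hn : (0 : ℝ) < n := by exact_mod_cast hn
  set z := x - regularConfig n
  set e : Fin n → ℝ := fun j => p j - 2 * phi x j with he
  have hsplit : spreadForm z p = 2 * spreadForm z (phi x) + spreadForm z e := by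
    simp only [spreadForm, he, Finset.mul_sum, ← Finset.sum_add_distrib]
    refine Finset.sum_congr rfl fun j _ => Finset.sum_congr rfl fun k _ => ?_
    ring
  have hphi : spreadForm z (phi x) ≤ -(n / 2 * imbalance x) :=
    spreadForm_sub_regularConfig_phi_le hx
  have herror : 2 * spreadForm z e ≤ n * imbalance x + 2 * ∑ j, e j ^ 2 :=
    calc 2 * spreadForm z e ≤ n * imbalance x + (n : ℝ)⁻¹ * spreadForm e e :=
          two_mul_spreadForm_le hn z e
      _ ≤ n * imbalance x + (n : ℝ)⁻¹ * (2 * n * ∑ j, e j ^ 2) := by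
          gcongr
          simpa only [Fintype.card_fin] using spreadForm_self_le e
      _ = n * imbalance x + 2 * ∑ j, e j ^ 2 := by field_simp
  linarith

end Imbalance

/-! ### Absolutely continuous paths -/

lemma absolutelyContinuousOnInterval_congr {X : Type*} [PseudoMetricSpace X] {f g : ℝ → X}
    {a b : ℝ} (hf : AbsolutelyContinuousOnInterval f a b) (hfg : EqOn f g (uIcc a b)) :
    AbsolutelyContinuousOnInterval g a b := by
  refine Tendsto.congr' ?_ hf
  filter_upwards [mem_inf_of_right (mem_principal_self _)] with E hE
  exact Finset.sum_congr rfl fun i hi => by rw [hfg (hE.1 i hi).1, hfg (hE.1 i hi).2]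

lemma absolutelyContinuousOnInterval_const {X : Type*} [PseudoMetricSpace X] (c : X) (a b : ℝ) :
    AbsolutelyContinuousOnInterval (fun _ => c) a b :=
  (LipschitzWith.const c).lipschitzOnWith.absolutelyContinuousOnInterval

lemma absolutelyContinuousOnInterval_sum {ι F : Type*} [SeminormedAddCommGroup F] (s : Finset ι)
    {f : ι → ℝ → F} {a b : ℝ} (hf : ∀ i ∈ s, AbsolutelyContinuousOnInterval (f i) a b) :
    AbsolutelyContinuousOnInterval (fun t => ∑ i ∈ s, f i t) a b := by
  rw [← Finset.sum_fn]
  exact Finset.sum_induction f (AbsolutelyContinuousOnInterval · a b) (fun _ _ => .add)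
    (absolutelyContinuousOnInterval_const 0 a b) hf

lemma absolutelyContinuousOnInterval_spreadForm {ι : Type*} [Fintype ι] {z w : ℝ → ι → ℝ}
    {a b : ℝ} (hz : ∀ j, AbsolutelyContinuousOnInterval (fun t => z t j) a b)
    (hw : ∀ j, AbsolutelyContinuousOnInterval (fun t => w t j) a b) :
    AbsolutelyContinuousOnInterval (fun t => spreadForm (z t) (w t)) a b :=
  absolutelyContinuousOnInterval_sum _ fun j _ => absolutelyContinuousOnInterval_sum _ fun k _ =>
    ((hz j).fun_sub (hz k)).fun_mul ((hw j).fun_sub (hw k))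

section Path

variable {n : ℕ} {θ : ℝ → Fin n → ℝ} {s t : ℝ}

lemma AbsCont.absolutelyContinuousOnInterval (hs : 0 ≤ s) (hst : s ≤ t) (h : AbsCont t θ)
    (j : Fin n) : AbsolutelyContinuousOnInterval (fun r => θ r j) s t := by
  obtain ⟨v, hv, hθ⟩ := h
  have ht : 0 ≤ t := hs.trans hst
  have hint : IntervalIntegrable (fun r => v r j) volume 0 t :=
    (intervalIntegrable_iff_integrableOn_Icc_of_le ht).2 (hv j)
  have hprim : AbsolutelyContinuousOnInterval (fun r => θ 0 j + ∫ u in (0 : ℝ)..r, v u j) 0 t :=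
    (absolutelyContinuousOnInterval_const (θ 0 j) 0 t).fun_add
      (hint.absolutelyContinuousOnInterval_intervalIntegral left_mem_uIcc)
  refine (absolutelyContinuousOnInterval_congr hprim fun r hr => ?_).mono ?_
  · rw [uIcc_of_le ht] at hr
    exact (hθ r hr j).symm
  · rw [uIcc_of_le hst, uIcc_of_le ht]
    exact Icc_subset_Icc_left hs

lemma absolutelyContinuousOnInterval_imbalance
    (hθ : ∀ j, AbsolutelyContinuousOnInterval (fun r => θ r j) s t) :
    AbsolutelyContinuousOnInterval (fun r => imbalance (θ r)) s t :=
  have hdisp : ∀ j, AbsolutelyContinuousOnInterval (fun r => (θ r - regularConfig n) j) s t :=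
    fun j => (hθ j).fun_sub (absolutelyContinuousOnInterval_const _ s t)
  absolutelyContinuousOnInterval_spreadForm hdisp hdisp

/-- The squared deviation `∑ⱼ |dθʲ/ds - 2 φʲ(θ)|²` of the velocity of `θ` from the drift: twice the
integrand of the Dirichlet energy. -/
def energyDensity (θ : ℝ → Fin n → ℝ) (s : ℝ) : ℝ :=
  ∑ j, (deriv (fun t => θ t j) s - 2 * phi (θ s) j) ^ 2

lemma energyDensity_nonneg (θ : ℝ → Fin n → ℝ) (s : ℝ) : 0 ≤ energyDensity θ s :=
  Finset.sum_nonneg fun _ _ => sq_nonneg _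

lemma deriv_imbalance_le (hX : θ s ∈ Xspace n)
    (hθ : ∀ j, DifferentiableAt ℝ (fun t => θ t j) s) :
    deriv (fun t => imbalance (θ t)) s ≤ -(n * imbalance (θ s)) + 2 * energyDensity θ s := by
  have hderiv : HasDerivAt (fun t => imbalance (θ t))
      (2 * spreadForm (θ s - regularConfig n) fun j => deriv (fun t => θ t j) s) s :=
    hasDerivAt_spreadForm_self fun j => (hθ j).hasDerivAt.sub_const _
  rw [hderiv.deriv]
  exact two_mul_spreadForm_sub_regularConfig_le hX _

lemma imbalance_add_integral_le (hst : s ≤ t)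
    (hθ : ∀ j, AbsolutelyContinuousOnInterval (fun r => θ r j) s t)
    (hX : ∀ r ∈ Icc s t, θ r ∈ Xspace n) (hE : IntervalIntegrable (energyDensity θ) volume s t) :
    imbalance (θ t) + n * ∫ r in s..t, imbalance (θ r) ≤
      imbalance (θ s) + 2 * ∫ r in s..t, energyDensity θ r := by
  have hAC := absolutelyContinuousOnInterval_imbalance hθ
  have hdamp : IntervalIntegrable (fun r => -(n * imbalance (θ r))) volume s t :=
    (hAC.continuousOn.intervalIntegrable.const_mul _).neg
  have hforce : IntervalIntegrable (fun r => 2 * energyDensity θ r) volume s t := hE.const_mul 2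
  have hdiff : ∀ᵐ r, ∀ j, r ∈ uIcc s t → DifferentiableAt ℝ (fun t => θ t j) r :=
    ae_all_iff.2 fun j => (hθ j).ae_differentiableAt
  have hle : ∫ r in s..t, deriv (fun r => imbalance (θ r)) r ≤
      ∫ r in s..t, (-(n * imbalance (θ r)) + 2 * energyDensity θ r) := by
    refine intervalIntegral.integral_mono_ae_restrict hst hAC.intervalIntegrable_deriv
      (hdamp.add hforce) ?_
    filter_upwards [ae_restrict_of_ae hdiff, ae_restrict_mem measurableSet_Icc] with r hr hmem
    exact deriv_imbalance_le (hX r hmem) fun j => hr j (Icc_subset_uIcc hmem)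
  rw [hAC.integral_deriv_eq_sub, intervalIntegral.integral_add hdamp hforce,
    intervalIntegral.integral_neg, intervalIntegral.integral_const_mul,
    intervalIntegral.integral_const_mul] at hle
  linarith

end Path

/-! ### Finite energy -/

section FiniteEnergy

variable {n : ℕ} {θ : ℝ → Fin n → ℝ}

lemma absCont_of_mEnergy_ne_top {T : ℝ} (h : mEnergy n T θ ≠ ⊤) : AbsCont T θ := by
  by_contra hAC
  exact h (if_neg hAC)

lemma absCont_of_mEnergyInf_lt_top (hJ : mEnergyInf n θ < ⊤) (T : ℝ) : AbsCont T θ :=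
  absCont_of_mEnergy_ne_top ((le_iSup (mEnergy n · θ) T).trans_lt hJ).ne

lemma aemeasurable_energyDensity {μ : Measure ℝ} (hθ : AEMeasurable θ μ) :
    AEMeasurable (energyDensity θ) μ := by
  have hcoord : ∀ j, AEMeasurable (fun s => θ s j) μ := aemeasurable_pi_iff.1 hθ
  have hphi : ∀ j, AEMeasurable (fun s => phi (θ s) j) μ := fun j =>
    Finset.aemeasurable_fun_sum _ fun k _ =>
      measurable_cot.comp_aemeasurable (((hcoord j).sub (hcoord k)).div_const 2)
  exact Finset.aemeasurable_fun_sum _ fun j _ =>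
    ((measurable_deriv _).aemeasurable.sub ((hphi j).const_mul 2)).pow_const 2

lemma half_mul_lintegral_energyDensity_le (hJ : mEnergyInf n θ < ⊤) (T : ℝ) :
    ENNReal.ofReal (1 / 2) * ∫⁻ s in Ioc 0 T, ENNReal.ofReal (energyDensity θ s) ≤
      mEnergyInf n θ := by
  refine le_trans (le_of_eq ?_) (le_iSup (mEnergy n · θ) T)
  exact (if_pos (absCont_of_mEnergyInf_lt_top hJ T)).symm

lemma lintegral_energyDensity_lt_top (hJ : mEnergyInf n θ < ⊤) :
    ∫⁻ s in Ioi 0, ENNReal.ofReal (energyDensity θ s) < ⊤ := by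
  have hmono : Monotone fun k : ℕ => Ioc (0 : ℝ) k := fun k l hkl =>
    Ioc_subset_Ioc_right (Nat.cast_le.2 hkl)
  have hle : ENNReal.ofReal (1 / 2) * ∫⁻ s in Ioi 0, ENNReal.ofReal (energyDensity θ s) ≤
      mEnergyInf n θ := by
    rw [← iUnion_Ioc_eq_Ioi_self_iff.2 fun x _ => exists_nat_ge x,
      setLIntegral_iUnion_of_directed _ hmono.directed_le, ENNReal.mul_iSup]
    exact iSup_le fun k => half_mul_lintegral_energyDensity_le hJ k
  exact ENNReal.lt_top_of_mul_ne_top_right (hle.trans_lt hJ).ne (by simp)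

lemma integrableOn_energyDensity (hθ : AEMeasurable θ (volume.restrict (Ioi 0)))
    (hJ : mEnergyInf n θ < ⊤) : IntegrableOn (energyDensity θ) (Ioi 0) :=
  ⟨(aemeasurable_energyDensity hθ).aestronglyMeasurable,
    (hasFiniteIntegral_iff_ofReal (.of_forall (energyDensity_nonneg θ))).2
      (lintegral_energyDensity_lt_top hJ)⟩

end FiniteEnergy

/-! ### Convergence -/

lemma exists_tendsto_of_antitoneOn_Ici {f : ℝ → ℝ} {a : ℝ} (hf : AntitoneOn f (Ici a))
    (hbdd : IsBoundedUnder (· ≥ ·) atTop f) : ∃ l, Tendsto f atTop (𝓝 l) := by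
  obtain ⟨m, hm⟩ := hbdd
  have hanti : Antitone fun t => f (max t a) := fun s t hst =>
    hf (le_max_right s a) (le_max_right t a) (max_le_max_right a hst)
  have hlower : BddBelow (range fun t => f (max t a)) := by
    refine ⟨m, forall_mem_range.2 fun t => ?_⟩
    obtain ⟨u, hmu, htu⟩ := ((eventually_map.1 hm).and (eventually_ge_atTop (max t a))).exists
    exact hmu.trans (hf (le_max_right t a) ((le_max_right t a).trans htu) htu)
  refine ⟨_, (tendsto_atTop_ciInf hanti hlower).congr' ?_⟩
  filter_upwards [eventually_ge_atTop a] with t ht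
  rw [max_eq_left ht]

lemma integrableOn_Ioi_of_mul_integral_le {D : ℝ → ℝ} {a c C : ℝ} (hc : 0 < c)
    (hD : ContinuousOn D (Ici a)) (hD0 : ∀ t, 0 ≤ D t)
    (h : ∀ᶠ t in atTop, c * ∫ r in a..t, D r ≤ C) : IntegrableOn D (Ioi a) := by
  refine integrableOn_Ioi_of_intervalIntegral_norm_bounded (C / c) a (fun t => ?_) tendsto_id ?_
  · exact (hD.mono Icc_subset_Ici_self).integrableOn_Icc.mono_set Ioc_subset_Icc_self
  · filter_upwards [h] with t ht
    simp only [Real.norm_of_nonneg (hD0 _)]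
    rwa [le_div_iff₀' hc]

/-- The damping makes `D` integrable and `D - G` antitone, so that `D` has a limit, which
integrability forces to be zero. -/
lemma tendsto_zero_of_damped {D G : ℝ → ℝ} {a c L : ℝ} (hc : 0 < c)
    (hD : ContinuousOn D (Ici a)) (hD0 : ∀ t, 0 ≤ D t) (hG : Tendsto G atTop (𝓝 L))
    (h : ∀ s t, a ≤ s → s ≤ t → D t + c * ∫ r in s..t, D r ≤ D s + (G t - G s)) :
    Tendsto D atTop (𝓝 0) := by
  have hanti : AntitoneOn (fun t => D t - G t) (Ici a) := fun s hs t _ hst => by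
    have hint : 0 ≤ ∫ r in s..t, D r := intervalIntegral.integral_nonneg hst fun r _ => hD0 r
    linarith [h s t hs hst, mul_nonneg hc.le hint]
  have hbdd : IsBoundedUnder (· ≥ ·) atTop fun t => D t - G t :=
    hG.neg.isBoundedUnder_ge.mono_ge (.of_forall fun t => by simpa using hD0 t)
  obtain ⟨l, hl⟩ := exists_tendsto_of_antitoneOn_Ici hanti hbdd
  have hlim : Tendsto D atTop (𝓝 (l + L)) := by simpa using hl.add hG
  have hint : IntegrableOn D (Ioi a) := by
    refine integrableOn_Ioi_of_mul_integral_le (C := D a + (L + 1 - G a)) hc hD hD0 ?_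
    filter_upwards [eventually_ge_atTop a, hG.eventually_le_const (lt_add_one L)] with t hat hGt
    linarith [h a t le_rfl hat, hD0 t]
  have hzero : l + L = 0 := by
    refine IntegrableAtFilter.eq_zero_of_tendsto ⟨Ioi a, Ioi_mem_atTop a, hint⟩
      (fun s hs => ?_) hlim
    obtain ⟨b, hb⟩ := mem_atTop_sets.1 hs
    exact measure_mono_top (show Ici b ⊆ s from hb) Real.volume_Ici
  rwa [hzero] at hlim

lemma tendsto_imbalance_zero {n : ℕ} (hn : 0 < n) {θ : ℝ → Fin n → ℝ}
    (hcont : ContinuousOn θ (Ici 0)) (hX : ∀ t ∈ Ici (0 : ℝ), θ t ∈ Xspace n)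
    (hJ : mEnergyInf n θ < ⊤) : Tendsto (fun t => imbalance (θ t)) atTop (𝓝 0) := by
  have hE : IntegrableOn (energyDensity θ) (Ioi 0) := integrableOn_energyDensity
    ((hcont.mono Ioi_subset_Ici_self).aemeasurable measurableSet_Ioi) hJ
  have hE_interval : ∀ s t, 0 ≤ s → s ≤ t → IntervalIntegrable (energyDensity θ) volume s t :=
    fun s t hs hst => (intervalIntegrable_iff_integrableOn_Ioc_of_le hst).2
      (hE.mono_set fun r hr => hs.trans_lt hr.1)
  have himbalance : ContinuousOn (fun t => imbalance (θ t)) (Ici 0) := by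
    unfold imbalance spreadForm
    fun_prop
  refine tendsto_zero_of_damped (c := n) (G := fun t => 2 * ∫ r in (0 : ℝ)..t, energyDensity θ r)
    (Nat.cast_pos.2 hn) himbalance (fun _ => imbalance_nonneg _)
    ((intervalIntegral_tendsto_integral_Ioi 0 hE tendsto_id).const_mul 2) fun s t hs hst => ?_
  rw [← mul_sub, intervalIntegral.integral_interval_sub_left
    (hE_interval 0 t le_rfl (hs.trans hst)) (hE_interval 0 s le_rfl hs)]
  exact imbalance_add_integral_le hst
    (fun j => (absCont_of_mEnergyInf_lt_top hJ t).absolutelyContinuousOnInterval hs hst j)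
    (fun r hr => hX r (hs.trans hr.1)) (hE_interval s t hs hst)

/-- If `n ≥ 2` and `θ : [0,∞) → 𝒳ₙ` is continuous with finite
multiradial Dirichlet energy `J(θ) < ∞`, then every gap `θ^{j+1}_t - θ^j_t`
converges to `2π/n` as `t → ∞`. -/
theorem finite_energy_gaps_converge
    (n : ℕ) (hn : 2 ≤ n) (θ : ℝ → Fin n → ℝ)
    (hcont : ContinuousOn θ (Ici 0))
    (hX : ∀ t ∈ Ici (0 : ℝ), θ t ∈ Xspace n)
    (hJ : mEnergyInf n θ < ⊤) :
    ∀ j : Fin n, Tendsto (fun t => gap (θ t) j) atTop (𝓝 (2 * π / n)) := by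
  intro j
  have hsqrt : Tendsto (fun t => √(imbalance (θ t))) atTop (𝓝 0) := by
    simpa using (tendsto_imbalance_zero (by omega) hcont hX hJ).sqrt
  rw [← tendsto_sub_nhds_zero_iff]
  exact squeeze_zero_norm (fun t => abs_gap_sub_le_sqrt_imbalance (θ t) j) hsqrt

end
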